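/- Let n be an odd positive integer and consider the function L(z) = ( ∏_{j=1}^{(n−1)/2} ((n/2 − j)² + z²) ) · z · sinh(πz)/cosh(πz) for z ∈ ℂ with cosh(πz) ≠ 0. Then L extends to a meromorphic function on ℂ which is holomorphic on ℂ ∖ { ± i(n/2 + q) : q ∈ ℕ } (in particular the zeros of the polynomial factor cancel the poles of tanh(πz) at the points ± i(1/2), …, ± i(n/2 − 1)); at each point i(n/2 + q), q ∈ ℕ, it has a simple pole with lim_{z → i(n/2+q)} (z − i(n/2+q)) L(z) = −i (−1)^{(n+1)/2} (n + 2q) (n + q − 1)! / (2π · q!); and since L is even (L(−z) = L(z)), at −i(n/2+q) the corresponding limit is +i (−1)^{(n+1)/2} (n + 2q) (n + q − 1)! / (2π · q!). -/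

import Mathlib

/-!
Write `L = N / cosh (π ·)` with `N` entire. Every zero `w` of `cosh (π ·)` is simple, since the
derivative there is `π sinh (π w) ≠ 0`; so near `w`, with difference quotients
`C = dslope (cosh (π ·)) w` and, if `N w = 0`, `M = dslope N w`, both entire:

* `(z - w) L(z) = N(z) / C(z) → N(w) / (π sinh (π w)) = P(w) w / π`, where `P` is the polynomial
  factor (`tendsto_residue`);
* if `P(w) = 0`, then `L = M / C` off `w`, so the singularity is removable (`exists_analytic`).

The extension `G` is `L` where `cosh (π z) ≠ 0`, and the punctured limit of `L` elsewhere.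
With `n = 2k + 1`, the zeros of `cosh (π ·)` are the points `± i (m + 1/2)`, `m ∈ ℕ`. Those with
`m < k` are zeros of `P`, the others are `± i (n/2 + q)`, `q ∈ ℕ`. At the latter,
`P(w) = (-1)^k ∏_{j=1}^k (q+j)(n+q-j)`, and the factors run exactly once through
`q+1, …, q+2k`, which gives `(-1)^k (n+q-1)!/q!` (`polyFactor_eval`).
-/

open Complex Filter

noncomputable section

/-- The function `L(z) = (∏_{j=1}^{(n-1)/2} ((n/2-j)² + z²)) · z · sinh(πz)/cosh(πz)`. -/
def SelbergL (n : ℕ) (z : ℂ) : ℂ :=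
  (∏ j ∈ Finset.Icc 1 ((n - 1) / 2), (((n : ℂ) / 2 - (j : ℂ)) ^ 2 + z ^ 2)) * z *
    Complex.sinh ((Real.pi : ℂ) * z) / Complex.cosh ((Real.pi : ℂ) * z)

/-- The polynomial factor `∏_{j=1}^{(n-1)/2} ((n/2-j)² + z²)` of `SelbergL n`. -/
def polyFactor (n : ℕ) (z : ℂ) : ℂ :=
  ∏ j ∈ Finset.Icc 1 ((n - 1) / 2), (((n : ℂ) / 2 - (j : ℂ)) ^ 2 + z ^ 2)

/-- The numerator of `SelbergL n`. -/
def selbergNum (n : ℕ) (z : ℂ) : ℂ :=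
  polyFactor n z * z * Complex.sinh ((Real.pi : ℂ) * z)

lemma SelbergL_eq (n : ℕ) (z : ℂ) :
    SelbergL n z = selbergNum n z / Complex.cosh ((Real.pi : ℂ) * z) := rfl

lemma polyFactor_neg (n : ℕ) (z : ℂ) : polyFactor n (-z) = polyFactor n z := by
  simp [polyFactor]

lemma SelbergL_neg (n : ℕ) (z : ℂ) : SelbergL n (-z) = SelbergL n z := by
  simp [SelbergL_eq, selbergNum, polyFactor_neg]

lemma differentiable_selbergNum (n : ℕ) : Differentiable ℂ (selbergNum n) := by
  unfold selbergNum polyFactor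
  fun_prop

lemma differentiable_coshPi : Differentiable ℂ (fun z : ℂ => Complex.cosh ((Real.pi : ℂ) * z)) := by
  fun_prop

lemma differentiable_dslope {f : ℂ → ℂ} (hf : Differentiable ℂ f) (w : ℂ) :
    Differentiable ℂ (dslope f w) := by
  rw [← differentiableOn_univ] at *
  exact (Complex.differentiableOn_dslope Filter.univ_mem).2 hf

lemma eq_mul_dslope {f : ℂ → ℂ} {w : ℂ} (hw : f w = 0) (z : ℂ) :
    f z = (z - w) * dslope f w z := by
  have := sub_smul_dslope f w z
  rw [smul_eq_mul, hw, sub_zero] at this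
  exact this.symm

lemma sinh_ne_zero_of_cosh {x : ℂ} (h : Complex.cosh x = 0) : Complex.sinh x ≠ 0 := by
  intro h'
  have := Complex.cosh_sq_sub_sinh_sq x
  simp [h, h'] at this

lemma pi_ne : (Real.pi : ℂ) ≠ 0 := by exact_mod_cast Real.pi_ne_zero

lemma dslope_cosh (w : ℂ) : dslope (fun z : ℂ => Complex.cosh ((Real.pi : ℂ) * z)) w w
    = Complex.sinh ((Real.pi : ℂ) * w) * Real.pi := by
  rw [dslope_same]
  have h := (((hasDerivAt_id w).const_mul (Real.pi : ℂ))).ccosh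
  simpa using h.deriv

/-- The zeros of `cosh (π ·)` are isolated. -/
lemma eventually_cosh_ne (w : ℂ) :
    ∀ᶠ z in nhdsWithin w {w}ᶜ, Complex.cosh ((Real.pi : ℂ) * z) ≠ 0 := by
  by_cases hw : Complex.cosh ((Real.pi : ℂ) * w) = 0
  · have hc := (differentiable_dslope differentiable_coshPi w).continuous.continuousAt (x := w)
    have h0 : dslope (fun z : ℂ => Complex.cosh ((Real.pi : ℂ) * z)) w w ≠ 0 := by
      rw [dslope_cosh]
      exact mul_ne_zero (sinh_ne_zero_of_cosh hw) pi_ne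
    filter_upwards [(hc.eventually_ne h0).filter_mono nhdsWithin_le_nhds, self_mem_nhdsWithin]
      with z hz hzw
    rw [eq_mul_dslope (f := fun z : ℂ => Complex.cosh ((Real.pi : ℂ) * z)) hw z]
    exact mul_ne_zero (sub_ne_zero.2 hzw) hz
  · exact (differentiable_coshPi.continuous.continuousAt.eventually_ne hw).filter_mono
      nhdsWithin_le_nhds

/-- The residue of `L` at a zero of `cosh (π ·)`, with no claim that it is nonzero. -/
lemma tendsto_residue (n : ℕ) {w : ℂ} (hw : Complex.cosh ((Real.pi : ℂ) * w) = 0) :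
    Tendsto (fun z => (z - w) * SelbergL n z) (nhdsWithin w {w}ᶜ)
      (nhds (polyFactor n w * w / Real.pi)) := by
  have h0 : dslope (fun z : ℂ => Complex.cosh ((Real.pi : ℂ) * z)) w w ≠ 0 := by
    rw [dslope_cosh]
    exact mul_ne_zero (sinh_ne_zero_of_cosh hw) pi_ne
  have hT : Tendsto
      (fun z => selbergNum n z / dslope (fun z : ℂ => Complex.cosh ((Real.pi : ℂ) * z)) w z)
      (nhds w) (nhds (polyFactor n w * w / Real.pi)) := by
    have h := ((differentiable_selbergNum n).continuous.continuousAt (x := w)).div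
      (differentiable_dslope differentiable_coshPi w).continuous.continuousAt h0
    have he : selbergNum n w / dslope (fun z : ℂ => Complex.cosh ((Real.pi : ℂ) * z)) w w
        = polyFactor n w * w / Real.pi := by
      rw [dslope_cosh, selbergNum]
      rw [mul_comm (Complex.sinh _) (Real.pi : ℂ)]
      exact mul_div_mul_right _ _ (sinh_ne_zero_of_cosh hw)
    rw [← he]
    exact h
  refine (hT.mono_left nhdsWithin_le_nhds).congr' ?_
  filter_upwards [self_mem_nhdsWithin] with z hzw
  rw [SelbergL_eq, eq_mul_dslope (f := fun z : ℂ => Complex.cosh ((Real.pi : ℂ) * z)) hw z]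
  have : z - w ≠ 0 := sub_ne_zero.2 hzw
  field_simp

/-- Zeros of the polynomial factor cancel the poles of `tanh (π ·)`. -/
lemma exists_analytic (n : ℕ) {w : ℂ} (hw : Complex.cosh ((Real.pi : ℂ) * w) = 0)
    (hP : polyFactor n w = 0) :
    ∃ F : ℂ → ℂ, AnalyticAt ℂ F w ∧ ∀ z, z ≠ w → SelbergL n z = F z := by
  have h0 : dslope (fun z : ℂ => Complex.cosh ((Real.pi : ℂ) * z)) w w ≠ 0 := by
    rw [dslope_cosh]
    exact mul_ne_zero (sinh_ne_zero_of_cosh hw) pi_ne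
  refine ⟨fun z => dslope (selbergNum n) w z /
    dslope (fun z : ℂ => Complex.cosh ((Real.pi : ℂ) * z)) w z, ?_, ?_⟩
  · exact ((differentiable_dslope (differentiable_selbergNum n) w).analyticAt w).div
      ((differentiable_dslope differentiable_coshPi w).analyticAt w) h0
  · intro z hzw
    have hN : selbergNum n w = 0 := by simp [selbergNum, hP]
    rw [SelbergL_eq, eq_mul_dslope (f := fun z : ℂ => Complex.cosh ((Real.pi : ℂ) * z)) hw z,
      eq_mul_dslope hN z]
    exact mul_div_mul_left _ _ (sub_ne_zero.2 hzw)

/-- The extension of `SelbergL n`: its value is the punctured limit at the zeros of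
`cosh (π ·)` (a junk value when this zero is a genuine pole). -/
def extL (n : ℕ) (z : ℂ) : ℂ :=
  open Classical in
  if Complex.cosh ((Real.pi : ℂ) * z) ≠ 0 then SelbergL n z
  else limUnder (nhdsWithin z {z}ᶜ) (SelbergL n)

lemma extL_of_ne (n : ℕ) {z : ℂ} (h : Complex.cosh ((Real.pi : ℂ) * z) ≠ 0) :
    extL n z = SelbergL n z := by
  simp [extL, h]

lemma extL_eventuallyEq (n : ℕ) (w : ℂ) : extL n =ᶠ[nhdsWithin w {w}ᶜ] SelbergL n := by
  filter_upwards [eventually_cosh_ne w] with z hz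
  exact extL_of_ne n hz

lemma meromorphicAt_extL (n : ℕ) (w : ℂ) : MeromorphicAt (extL n) w := by
  have h : MeromorphicAt (SelbergL n) w :=
    ((differentiable_selbergNum n).analyticAt w).meromorphicAt.div
      (differentiable_coshPi.analyticAt w).meromorphicAt
  exact h.congr (extL_eventuallyEq n w).symm

lemma analyticAt_extL (n : ℕ) {w : ℂ}
    (h : Complex.cosh ((Real.pi : ℂ) * w) = 0 → polyFactor n w = 0) :
    AnalyticAt ℂ (extL n) w := by
  by_cases hw : Complex.cosh ((Real.pi : ℂ) * w) = 0
  · obtain ⟨F, hF, hLF⟩ := exists_analytic n hw (h hw)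
    have hT : Tendsto (SelbergL n) (nhdsWithin w {w}ᶜ) (nhds (F w)) := by
      refine (hF.continuousAt.tendsto.mono_left nhdsWithin_le_nhds).congr' ?_
      filter_upwards [self_mem_nhdsWithin] with z hz
      exact (hLF z hz).symm
    refine hF.congr ?_
    have hpt : extL n w = F w := by
      simpa [extL, hw] using hT.limUnder_eq
    have := eventually_nhdsWithin_iff.1 (extL_eventuallyEq n w)
    filter_upwards [this] with z hz
    by_cases hzw : z = w
    · rw [hzw, hpt]
    · rw [hz hzw, hLF z hzw]
  · have hL : AnalyticAt ℂ (SelbergL n) w :=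
      ((differentiable_selbergNum n).analyticAt w).div (differentiable_coshPi.analyticAt w) hw
    refine hL.congr ?_
    filter_upwards [differentiable_coshPi.continuous.continuousAt.eventually_ne hw] with z hz
    exact (extL_of_ne n hz).symm

lemma cosh_pi_eq_zero_iff (z : ℂ) : Complex.cosh ((Real.pi : ℂ) * z) = 0 ↔
    ∃ m : ℤ, z = I * ((m : ℂ) + 1 / 2) := by
  have hpi := pi_ne
  rw [← Complex.cos_mul_I, Complex.cos_eq_zero_iff]
  constructor
  · rintro ⟨m, hm⟩
    refine ⟨-m - 1, ?_⟩
    have h1 : z * I = (2 * (m : ℂ) + 1) / 2 := by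
      apply mul_left_cancel₀ hpi
      linear_combination hm
    push_cast
    linear_combination (-I) * h1 + z * I_mul_I
  · rintro ⟨m, rfl⟩
    refine ⟨-m - 1, ?_⟩
    push_cast
    linear_combination (Real.pi : ℂ) * (m + 1 / 2) * I_mul_I

/-- A zero of `cosh (π ·)` is either `± i (n/2 + q)` or a zero of the polynomial factor. -/
lemma polyFactor_eq_zero (k : ℕ) {z : ℂ} (hz : Complex.cosh ((Real.pi : ℂ) * z) = 0)
    (h : ∀ q : ℕ, z ≠ I * (((2 * k + 1 : ℕ) : ℂ) / 2 + (q : ℂ)) ∧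
      z ≠ -(I * (((2 * k + 1 : ℕ) : ℂ) / 2 + (q : ℂ)))) : polyFactor (2 * k + 1) z = 0 := by
  obtain ⟨m, rfl⟩ := (cosh_pi_eq_zero_iff z).1 hz
  have key : ∀ p : ℕ, p < k → ∀ s : ℂ, s ^ 2 = ((p : ℂ) + 1 / 2) ^ 2 →
      polyFactor (2 * k + 1) (I * s) = 0 := by
    intro p hp s hs
    refine Finset.prod_eq_zero (i := k - p) (by simp only [Finset.mem_Icc]; omega) ?_
    rw [Nat.cast_sub hp.le]
    push_cast
    linear_combination s ^ 2 * I_sq - hs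
  rcases Int.eq_nat_or_neg m with ⟨p, rfl | rfl⟩
  · by_cases hp : p < k
    · exact key p hp _ (by push_cast; ring)
    · refine absurd ?_ (h (p - k)).1
      rw [Nat.cast_sub (not_lt.1 hp)]
      push_cast
      ring
  · rcases p with _ | p
    · by_cases hp : 0 < k
      · exact key 0 hp _ (by push_cast; ring)
      · refine absurd ?_ (h 0).1
        have : k = 0 := by omega
        subst this
        push_cast
        ring
    · by_cases hp : p < k
      · exact key p hp _ (by push_cast; ring)
      · refine absurd ?_ (h (p - k)).2
        rw [Nat.cast_sub (not_lt.1 hp)]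
        push_cast
        ring

/-- The products of `q + j` and of `2k + 1 + q - j` over `j = 1, …, k` telescope to
`(q+k)!/q!` and `(q+2k)!/(q+k)!`. -/
lemma prod_factorial (k q : ℕ) :
    (∏ j ∈ Finset.Icc 1 k, (((q : ℂ) + j) * ((2 * k + 1 + q : ℂ) - j))) * (q.factorial : ℂ)
      = ((2 * k + q).factorial : ℂ) := by
  have h1 : ∀ k : ℕ, (∏ j ∈ Finset.Icc 1 k, ((q : ℂ) + j)) * (q.factorial : ℂ)
      = ((q + k).factorial : ℂ) := by
    intro k
    induction k with
    | zero => simp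
    | succ k ih =>
      rw [Finset.prod_Icc_succ_top (by omega), ← add_assoc q k 1, Nat.factorial_succ]
      push_cast
      rw [← ih]
      ring
  -- With the larger endpoint `a` fixed, the second product removes the top factors of `a !`.
  have h2 : ∀ a k : ℕ, k ≤ a → (∏ j ∈ Finset.Icc 1 k, ((a : ℂ) + 1 - j)) *
      ((a - k).factorial : ℂ) = (a.factorial : ℂ) := by
    intro a k
    induction k with
    | zero => simp
    | succ k ih =>
      intro hk
      rw [Finset.prod_Icc_succ_top (by omega), ← ih (by omega)]
      obtain ⟨b, rfl⟩ := Nat.exists_eq_add_of_le hk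
      rw [show k + 1 + b - (k + 1) = b by omega, show k + 1 + b - k = b + 1 by omega,
        Nat.factorial_succ]
      push_cast
      ring
  have h3 := h2 (2 * k + q) k (by omega)
  rw [show 2 * k + q - k = q + k by omega] at h3
  rw [Finset.prod_mul_distrib, ← h3, ← h1 k]
  have h4 : ∏ j ∈ Finset.Icc 1 k, ((2 * k + 1 + q : ℂ) - j)
      = ∏ j ∈ Finset.Icc 1 k, (((2 * k + q : ℕ) : ℂ) + 1 - j) := by
    refine Finset.prod_congr rfl fun j _ => ?_
    push_cast
    ring
  rw [h4]
  ring

lemma polyFactor_eval (k q : ℕ) :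
    polyFactor (2 * k + 1) (I * (((2 * k + 1 : ℕ) : ℂ) / 2 + (q : ℂ)))
      = (-1) ^ k * ((2 * k + q).factorial : ℂ) / (q.factorial : ℂ) := by
  have hq : (q.factorial : ℂ) ≠ 0 := by exact_mod_cast q.factorial_ne_zero
  rw [eq_div_iff hq, ← prod_factorial, ← mul_assoc]
  congr 1
  unfold polyFactor
  rw [show (2 * k + 1 - 1) / 2 = k by omega]
  have hc : (-1 : ℂ) ^ k = ∏ j ∈ Finset.Icc 1 k, (-1 : ℂ) := by simp
  rw [hc, ← Finset.prod_mul_distrib]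
  refine Finset.prod_congr rfl fun j _ => ?_
  push_cast
  linear_combination ((2 * k + 1 : ℂ) / 2 + q) ^ 2 * I_sq

/-- For `n` odd, `L(z)` extends to a meromorphic function on `ℂ`,
holomorphic on `ℂ ∖ {± i(n/2+q) : q ∈ ℕ}`, with at `± i(n/2+q)` simple poles with
`lim_{z→i(n/2+q)} (z - i(n/2+q)) L(z) = -i (-1)^{(n+1)/2} (n+2q)(n+q-1)!/(2π·q!)` and the
opposite value at `-i(n/2+q)`; moreover `L` is even. -/
theorem statement8 (n : ℕ) (hodd : Odd n) (hn : 1 ≤ n) :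
    (∀ z : ℂ, SelbergL n (-z) = SelbergL n z) ∧
    ∃ G : ℂ → ℂ,
      (∀ z : ℂ, Complex.cosh ((Real.pi : ℂ) * z) ≠ 0 → G z = SelbergL n z) ∧
      (∀ z : ℂ, MeromorphicAt G z) ∧
      (∀ z : ℂ, (∀ q : ℕ, z ≠ I * ((n : ℂ) / 2 + (q : ℂ)) ∧
          z ≠ -(I * ((n : ℂ) / 2 + (q : ℂ)))) → AnalyticAt ℂ G z) ∧
      (∀ q : ℕ,
        Tendsto (fun z : ℂ => (z - I * ((n : ℂ) / 2 + (q : ℂ))) * G z)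
          (nhdsWithin (I * ((n : ℂ) / 2 + (q : ℂ))) {w : ℂ | w ≠ I * ((n : ℂ) / 2 + (q : ℂ))})
          (nhds (-I * (-1 : ℂ) ^ ((n + 1) / 2) * ((n : ℂ) + 2 * (q : ℂ)) *
            (Nat.factorial (n + q - 1) : ℂ) / (2 * (Real.pi : ℂ) * (Nat.factorial q : ℂ))))) ∧
      (∀ q : ℕ,
        Tendsto (fun z : ℂ => (z + I * ((n : ℂ) / 2 + (q : ℂ))) * G z)
          (nhdsWithin (-(I * ((n : ℂ) / 2 + (q : ℂ))))
            {w : ℂ | w ≠ -(I * ((n : ℂ) / 2 + (q : ℂ)))})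
          (nhds (I * (-1 : ℂ) ^ ((n + 1) / 2) * ((n : ℂ) + 2 * (q : ℂ)) *
            (Nat.factorial (n + q - 1) : ℂ) / (2 * (Real.pi : ℂ) * (Nat.factorial q : ℂ))))) := by
  obtain ⟨k, rfl⟩ := hodd
  have hcosh : ∀ q : ℕ, Complex.cosh ((Real.pi : ℂ) *
      (I * (((2 * k + 1 : ℕ) : ℂ) / 2 + (q : ℂ)))) = 0 := by
    intro q
    refine (cosh_pi_eq_zero_iff _).2 ⟨k + q, ?_⟩
    push_cast
    ring
  have hpow : (2 * k + 1 + 1) / 2 = k + 1 := by omega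
  have hfac : ∀ q : ℕ, 2 * k + 1 + q - 1 = 2 * k + q := by omega
  have hpi := pi_ne
  refine ⟨SelbergL_neg _, extL (2 * k + 1), fun z hz => extL_of_ne _ hz,
    meromorphicAt_extL _, fun z hz => analyticAt_extL _ fun h => polyFactor_eq_zero k h hz, ?_, ?_⟩
  · intro q
    have h := (tendsto_residue (2 * k + 1) (hcosh q)).congr'
      ((extL_eventuallyEq (2 * k + 1) _).symm.mono fun z hz => by rw [hz])
    convert h using 2
    · rfl
    rw [polyFactor_eval, hpow, hfac, pow_succ]
    have hq : (q.factorial : ℂ) ≠ 0 := by exact_mod_cast q.factorial_ne_zero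
    push_cast
    field_simp
  · intro q
    have hneg : Complex.cosh ((Real.pi : ℂ) *
        -(I * (((2 * k + 1 : ℕ) : ℂ) / 2 + (q : ℂ)))) = 0 := by
      rw [mul_neg, Complex.cosh_neg, hcosh]
    have h := (tendsto_residue (2 * k + 1) hneg).congr'
      ((extL_eventuallyEq (2 * k + 1) _).symm.mono fun z hz => by rw [hz])
    simp only [sub_neg_eq_add] at h
    convert h using 2
    · rfl
    rw [polyFactor_neg, polyFactor_eval, hpow, hfac, pow_succ]
    have hq : (q.factorial : ℂ) ≠ 0 := by exact_mod_cast q.factorial_ne_zero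
    push_cast
    field_simp
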